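/- Let Γ be a finite simplicial graph and H_Φ a generalized Bestvina–Brady subgroup of A_Γ. If H_Φ is strong (each basis subgraph is connected and strongly dominating), then the distortion of H_Φ in A_Γ is at most quadratic, i.e. Dist_{A_Γ}^{H_Φ} ⪯ n². If moreover H_Φ is special (each basis subgraph is connected and specially dominating), then the distortion of H_Φ in A_Γ is linear, i.e. Dist_{A_Γ}^{H_Φ} ∼ n. -/

import Mathlib

/-- The word length of `g` with respect to a set `S` of letters. -/
noncomputable def wordLength {G : Type*} [Group G] (S : Set G) (g : G) : ℕ :=
  sInf {n | ∃ l : List G, l.length = n ∧ (∀ x ∈ l, x ∈ S ∨ x⁻¹ ∈ S) ∧ l.prod = g}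

/-- The distortion function: `Dist(r) = max { |h|_T : h ∈ H, |h|_S ≤ r }`. -/
noncomputable def distortion {G : Type*} [Group G] (S T : Set G) (H : Subgroup G)
    (r : ℕ) : ℕ :=
  sSup {n | ∃ h ∈ H, wordLength S h ≤ r ∧ wordLength T h = n}

/-- `f ⪯ g`. -/
def Dominated (f g : ℕ → ℕ) : Prop :=
  ∃ A B C D : ℕ, 0 < A ∧ 0 < B ∧ 0 < C ∧ ∀ x : ℕ, D < x → f x ≤ A * g (B * x) + C * x

/-- `f ∼ g`. -/
def FEquiv (f g : ℕ → ℕ) : Prop := Dominated f g ∧ Dominated g f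

/-- The defining relators of the right-angled Artin group of a graph `Γ`. -/
def raagRels {V : Type*} (Γ : SimpleGraph V) : Set (FreeGroup V) :=
  {r | ∃ u v : V, Γ.Adj u v ∧
    r = FreeGroup.of u * FreeGroup.of v * (FreeGroup.of u)⁻¹ * (FreeGroup.of v)⁻¹}

/-- The right-angled Artin group of a graph `Γ`. -/
abbrev RAAG {V : Type*} (Γ : SimpleGraph V) : Type _ := PresentedGroup (raagRels Γ)

/-- The standard generator of `RAAG Γ` associated to a vertex. -/
def raagGen {V : Type*} (Γ : SimpleGraph V) (v : V) : RAAG Γ := PresentedGroup.of v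

/-- `g` is a product of at most `n` letters from `T` and inverses. -/
def LenLE {G : Type*} [Group G] (T : Set G) (g : G) (n : ℕ) : Prop :=
  ∃ l : List G, l.length ≤ n ∧ (∀ x ∈ l, x ∈ T ∨ x⁻¹ ∈ T) ∧ l.prod = g

theorem LenLE.one {G : Type*} [Group G] (T : Set G) : LenLE T 1 0 :=
  ⟨[], by simp⟩

theorem LenLE.mono {G : Type*} [Group G] {T : Set G} {g : G} {m n : ℕ}
    (h : LenLE T g m) (hmn : m ≤ n) : LenLE T g n := by
  obtain ⟨l, h1, h2, h3⟩ := h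
  exact ⟨l, h1.trans hmn, h2, h3⟩

theorem LenLE.mul {G : Type*} [Group G] {T : Set G} {g h : G} {m n : ℕ}
    (hg : LenLE T g m) (hh : LenLE T h n) : LenLE T (g * h) (m + n) := by
  obtain ⟨l, h1, h2, h3⟩ := hg
  obtain ⟨l', h1', h2', h3'⟩ := hh
  refine ⟨l ++ l', ?_, ?_, ?_⟩
  · rw [List.length_append]; omega
  · intro x hx
    rcases List.mem_append.1 hx with hx | hx
    · exact h2 x hx
    · exact h2' x hx
  · rw [List.prod_append, h3, h3']

theorem LenLE.inv {G : Type*} [Group G] {T : Set G} {g : G} {m : ℕ}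
    (hg : LenLE T g m) : LenLE T g⁻¹ m := by
  obtain ⟨l, h1, h2, h3⟩ := hg
  refine ⟨(l.map (fun x => x⁻¹)).reverse, ?_, ?_, ?_⟩
  · simpa using h1
  · intro x hx
    simp only [List.mem_reverse, List.mem_map] at hx
    obtain ⟨y, hy, rfl⟩ := hx
    rw [inv_inv]
    exact (h2 y hy).symm
  · rw [← h3, List.prod_inv_reverse]

theorem LenLE.pow {G : Type*} [Group G] {T : Set G} {g : G} {m : ℕ}
    (hg : LenLE T g m) (k : ℕ) : LenLE T (g ^ k) (m * k) := by
  induction k with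
  | zero => simpa using LenLE.one T
  | succ k ih => rw [pow_succ, Nat.mul_succ]; exact ih.mul hg

theorem LenLE.zpow {G : Type*} [Group G] {T : Set G} {g : G} {m : ℕ}
    (hg : LenLE T g m) (k : ℤ) : LenLE T (g ^ k) (m * k.natAbs) := by
  rcases Int.natAbs_eq k with h | h
  · conv => arg 2; rw [h, zpow_natCast]
    exact hg.pow _
  · conv => arg 2; rw [h, zpow_neg, zpow_natCast]
    exact (hg.pow _).inv

theorem LenLE.wordLength_le {G : Type*} [Group G] {T : Set G} {g : G} {m : ℕ}
    (hg : LenLE T g m) : wordLength T g ≤ m := by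
  obtain ⟨l, h1, h2, h3⟩ := hg
  exact (Nat.sInf_le ⟨l, rfl, h2, h3⟩ : wordLength T g ≤ l.length).trans h1

theorem closure_list {G : Type*} [Group G] {T : Set G} {g : G}
    (hg : g ∈ Subgroup.closure T) :
    ∃ l : List G, (∀ x ∈ l, x ∈ T ∨ x⁻¹ ∈ T) ∧ l.prod = g := by
  rw [← Subgroup.mem_toSubmonoid, Subgroup.closure_toSubmonoid] at hg
  obtain ⟨l, h1, h2⟩ := Submonoid.exists_list_of_mem_closure hg
  exact ⟨l, fun x hx => by simpa using h1 x hx, h2⟩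

theorem LenLE.exists_of_mem {G : Type*} [Group G] {T : Set G} {g : G}
    (hg : g ∈ Subgroup.closure T) : ∃ m, LenLE T g m := by
  obtain ⟨l, h1, h2⟩ := closure_list hg
  exact ⟨l.length, l, le_rfl, h1, h2⟩

theorem raag_comm {V : Type*} (Γ : SimpleGraph V) {u v : V} (h : Γ.Adj u v) :
    Commute (raagGen Γ u) (raagGen Γ v) := by
  have h1 : PresentedGroup.mk (raagRels Γ)
      (FreeGroup.of u * FreeGroup.of v * (FreeGroup.of u)⁻¹ * (FreeGroup.of v)⁻¹) = 1 :=
    PresentedGroup.one_of_mem ⟨u, v, h, rfl⟩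
  simp only [map_mul, map_inv] at h1
  rw [mul_inv_eq_one, mul_inv_eq_iff_eq_mul] at h1
  exact h1

theorem raag_word {V : Type*} (Γ : SimpleGraph V) (h : RAAG Γ) :
    ∃ l : List (RAAG Γ), l.length = wordLength (Set.range (raagGen Γ)) h ∧
      (∀ x ∈ l, x ∈ Set.range (raagGen Γ) ∨ x⁻¹ ∈ Set.range (raagGen Γ)) ∧ l.prod = h := by
  have hc : h ∈ Subgroup.closure (Set.range (raagGen Γ)) := by
    have : Subgroup.closure (Set.range (raagGen Γ)) = ⊤ :=
      PresentedGroup.closure_range_of (raagRels Γ)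
    rw [this]; trivial
  obtain ⟨l, h1, h2⟩ := closure_list hc
  exact Nat.sInf_mem (s := {n | ∃ l : List (RAAG Γ), l.length = n ∧
    (∀ x ∈ l, x ∈ Set.range (raagGen Γ) ∨ x⁻¹ ∈ Set.range (raagGen Γ)) ∧ l.prod = h})
    ⟨l.length, l, rfl, h1, h2⟩

theorem core_word {V : Type*} (Γ : SimpleGraph V) (d : ℕ) (lab : V → Fin d)
    (Φ : RAAG Γ →* (Fin d → Multiplicative ℤ))
    (hΦ : ∀ v : V, Φ (raagGen Γ v) = Pi.mulSingle (lab v) (Multiplicative.ofAdd 1))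
    (u : Fin d → V) (σ : (Fin d → Multiplicative ℤ) →* RAAG Γ)
    (hσ : ∀ i (a : ℤ), σ (Pi.mulSingle i (Multiplicative.ofAdd a)) = raagGen Γ (u i) ^ a)
    (T : Set (RAAG Γ)) (N M : ℕ)
    (hM : ∀ (s : Fin d → Multiplicative ℤ) (v : V),
      (∀ i, (Multiplicative.toAdd (s i)).natAbs ≤ N) →
      LenLE T (σ s * (raagGen Γ v * (raagGen Γ (u (lab v)))⁻¹) * (σ s)⁻¹) M)
    (l : List (RAAG Γ))
    (hl : ∀ x ∈ l, x ∈ Set.range (raagGen Γ) ∨ x⁻¹ ∈ Set.range (raagGen Γ)) :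
    ∀ s : Fin d → Multiplicative ℤ,
      (∀ i, (Multiplicative.toAdd (s i)).natAbs + l.length ≤ N) →
      LenLE T (σ s * l.prod * (σ (s * Φ l.prod))⁻¹) (l.length * M) := by
  have key : ∀ (s : Fin d → Multiplicative ℤ) (v : V),
      (∀ i, (Multiplicative.toAdd (s i)).natAbs ≤ N) →
      LenLE T (σ s * raagGen Γ v * (σ (s * Φ (raagGen Γ v)))⁻¹) M := by
    intro s v hs
    have := hM s v hs
    rw [hΦ, map_mul, hσ, zpow_one]
    convert this using 1
    group
  have hbd : ∀ v i, (Multiplicative.toAdd (Φ (raagGen Γ v) i)).natAbs ≤ 1 := by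
    intro v i
    rw [hΦ]
    by_cases h : i = lab v
    · subst h; simp
    · simp [Pi.mulSingle_eq_of_ne h]
  induction l with
  | nil => intro s _; simpa using LenLE.one T
  | cons x l ih =>
    intro s hs
    have hx : (∀ i, (Multiplicative.toAdd (Φ x i)).natAbs ≤ 1) ∧
        LenLE T (σ s * x * (σ (s * Φ x))⁻¹) M := by
      rcases hl x (by simp) with ⟨v, rfl⟩ | ⟨v, hv⟩
      · refine ⟨hbd v, key s v fun i => ?_⟩
        have := hs i
        omega
      · have hxv : x = (raagGen Γ v)⁻¹ := by rw [hv, inv_inv]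
        subst hxv
        refine ⟨fun i => ?_, ?_⟩
        · have := hbd v i
          simpa using this
        · have := key (s * (Φ (raagGen Γ v))⁻¹) v (fun i => ?_)
          · convert this.inv using 1
            simp only [map_inv, map_mul]
            group
          · have h1 := hs i
            have h2 := hbd v i
            simp only [List.length_cons] at h1
            simp only [Pi.mul_apply, Pi.inv_apply, toAdd_mul, toAdd_inv]
            omega
    have h2 := ih (fun y hy => hl y (by simp [hy])) (s * Φ x) (fun i => by
      have h1 := hs i
      have h2 := hx.1 i
      simp only [List.length_cons] at h1
      simp only [Pi.mul_apply, toAdd_mul]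
      omega)
    have h3 := hx.2.mul h2
    refine (?_ : LenLE T _ (M + l.length * M)).mono
      (by rw [List.length_cons, Nat.succ_mul, Nat.add_comm])
    convert h3 using 1
    rw [List.prod_cons, map_mul Φ, mul_assoc s]
    group

theorem core_dist {V : Type*} (Γ : SimpleGraph V) (d : ℕ) (lab : V → Fin d)
    (Φ : RAAG Γ →* (Fin d → Multiplicative ℤ))
    (hΦ : ∀ v : V, Φ (raagGen Γ v) = Pi.mulSingle (lab v) (Multiplicative.ofAdd 1))
    (u : Fin d → V) (σ : (Fin d → Multiplicative ℤ) →* RAAG Γ)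
    (hσ : ∀ i (a : ℤ), σ (Pi.mulSingle i (Multiplicative.ofAdd a)) = raagGen Γ (u i) ^ a)
    (T : Set (RAAG Γ)) (N M : ℕ)
    (hM : ∀ (s : Fin d → Multiplicative ℤ) (v : V),
      (∀ i, (Multiplicative.toAdd (s i)).natAbs ≤ N) →
      LenLE T (σ s * (raagGen Γ v * (raagGen Γ (u (lab v)))⁻¹) * (σ s)⁻¹) M) :
    distortion (Set.range (raagGen Γ)) T Φ.ker N ≤ N * M := by
  apply csSup_le'
  rintro n ⟨h, hh, hr, rfl⟩
  obtain ⟨l, h1, h2, h3⟩ := raag_word Γ h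
  have := core_word Γ d lab Φ hΦ u σ hσ T N M hM l h2 1 (fun i => by simp; omega)
  rw [h3, MonoidHom.mem_ker.1 hh] at this
  simp only [map_one, one_mul, mul_one, inv_one] at this
  refine this.wordLength_le.trans (Nat.mul_le_mul_right _ (by omega))

theorem exists_sigma {V : Type*} (Γ : SimpleGraph V) (d : ℕ) (lab : V → Fin d)
    (u : Fin d → V) (hu : ∀ i, lab (u i) = i)
    (hadj : ∀ i v, lab v ≠ i → Γ.Adj (u i) v) :
    ∃ σ : (Fin d → Multiplicative ℤ) →* RAAG Γ,
      (∀ i (a : ℤ), σ (Pi.mulSingle i (Multiplicative.ofAdd a)) = raagGen Γ (u i) ^ a) ∧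
      (∀ (g : RAAG Γ) (s : Fin d → Multiplicative ℤ),
        (∀ i, Commute g (raagGen Γ (u i) ^ (Multiplicative.toAdd (s i)))) →
        Commute g (σ s)) := by
  have hcm : Pairwise fun i j => ∀ (x y : Multiplicative ℤ),
      Commute (zpowersHom (RAAG Γ) (raagGen Γ (u i)) x)
        (zpowersHom (RAAG Γ) (raagGen Γ (u j)) y) := by
    intro i j hij x y
    simp only [zpowersHom_apply]
    exact ((raag_comm Γ (hadj i (u j) (by rw [hu]; exact hij.symm))).zpow_zpow _ _)
  refine ⟨MonoidHom.noncommPiCoprod (fun i => zpowersHom (RAAG Γ) (raagGen Γ (u i))) hcm, ?_, ?_⟩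
  · intro i a
    exact MonoidHom.noncommPiCoprod_mulSingle (hcomm := hcm) _ i _
  · intro g s hs
    change Commute g (Finset.univ.noncommProd
      (fun i => zpowersHom (RAAG Γ) (raagGen Γ (u i)) (s i)) (fun _ _ _ _ h => hcm h _ _))
    refine Finset.noncommProd_commute _ _ _ _ ?_
    intro i _
    exact hs i

theorem path_len {V : Type*} (Γ : SimpleGraph V) (T : Set (RAAG Γ)) (W : Set V)
    (hT : ∀ v w, v ∈ W → w ∈ W → raagGen Γ v * (raagGen Γ w)⁻¹ ∈ Subgroup.closure T)
    {v w : W} (p : (Γ.induce W).Walk v w) :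
    ∃ m : ℕ, ∀ a : ℤ, LenLE T (raagGen Γ v ^ a * (raagGen Γ w ^ a)⁻¹) (m * a.natAbs) := by
  induction p with
  | nil => exact ⟨0, fun a => by simpa using LenLE.one T⟩
  | @cons x y z h p ih =>
    obtain ⟨m, hm⟩ := ih
    obtain ⟨k, hk⟩ := LenLE.exists_of_mem (hT x y x.2 y.2)
    refine ⟨k + m, fun a => ?_⟩
    have hc : Commute (raagGen Γ (x : V)) (raagGen Γ (y : V)) := raag_comm Γ h
    have h1 := hk.zpow a
    rw [hc.inv_right.mul_zpow] at h1
    have h2 := h1.mul (hm a)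
    rw [Nat.add_mul]
    convert h2 using 1
    rw [inv_zpow]
    group

theorem stmt17 {V : Type*} [Fintype V] (Γ : SimpleGraph V) (d : ℕ)
    (lab : V → Fin d) (hlab : Function.Surjective lab)
    (Φ : RAAG Γ →* (Fin d → Multiplicative ℤ))
    (hΦ : ∀ v : V, Φ (raagGen Γ v) = Pi.mulSingle (lab v) (Multiplicative.ofAdd 1))
    -- `H_Φ` is strong: each basis subgraph is connected and strongly dominating
    (hstrong : ∀ i : Fin d, (Γ.induce {v : V | lab v = i}).Connected ∧
      ∃ u : V, lab u = i ∧ ∀ v : V, lab v ≠ i → Γ.Adj u v) :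
    -- the distortion of `H_Φ` in `A_Γ` is at most quadratic
    (∀ T : Set (RAAG Γ), T.Finite → T ⊆ (Φ.ker : Set (RAAG Γ)) →
      Subgroup.closure T = Φ.ker →
      Dominated (distortion (Set.range (raagGen Γ)) T Φ.ker) (fun n => n ^ 2)) ∧
    -- if moreover `H_Φ` is special, the distortion of `H_Φ` in `A_Γ` is linear
    ((∀ i : Fin d, ∃ u : V, lab u = i ∧ ∀ v : V, v ≠ u → Γ.Adj u v) →
      ∀ T : Set (RAAG Γ), T.Finite → T ⊆ (Φ.ker : Set (RAAG Γ)) →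
        Subgroup.closure T = Φ.ker →
        FEquiv (distortion (Set.range (raagGen Γ)) T Φ.ker) (fun n => n)) := by
  have hz : ∀ v w, lab v = lab w → raagGen Γ v * (raagGen Γ w)⁻¹ ∈ Φ.ker := by
    intro v w h
    rw [MonoidHom.mem_ker, map_mul, map_inv, hΦ, hΦ, h, mul_inv_cancel]
  constructor
  · intro T _ _ hT
    choose hconn u hu hadj using hstrong
    obtain ⟨σ, hσ, hσc⟩ := exists_sigma Γ d lab u hu hadj
    have hpath : ∀ v : V, ∃ m : ℕ, ∀ a : ℤ,
        LenLE T (raagGen Γ (u (lab v)) ^ a * (raagGen Γ v ^ a)⁻¹) (m * a.natAbs) := by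
      intro v
      obtain ⟨p⟩ := (hconn (lab v)).preconnected ⟨u (lab v), hu _⟩ ⟨v, rfl⟩
      refine path_len Γ T {w | lab w = lab v} (fun x y hx hy => ?_) p
      rw [hT]
      exact hz x y (Eq.trans hx (Eq.symm hy))
    choose m hm using hpath
    have hK : ∃ K, ∀ v, m v ≤ K := ⟨∑ v, m v, fun v =>
      Finset.single_le_sum (f := m) (fun _ _ => Nat.zero_le _) (Finset.mem_univ v)⟩
    obtain ⟨K, hK⟩ := hK
    refine ⟨2 * K + 1, 1, K + 1, 0, by omega, by omega, by omega, fun N _ => ?_⟩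
    refine (core_dist Γ d lab Φ hΦ u σ hσ T N (K * (2 * N + 1)) ?_).trans
      (by simp only [one_mul]; nlinarith [sq_nonneg N])
    intro s v hs
    set i := lab v with hi
    set a : ℤ := Multiplicative.toAdd (s i) with ha
    set t : Fin d → Multiplicative ℤ := (Pi.mulSingle i (Multiplicative.ofAdd a))⁻¹ * s with ht
    have hst : s = Pi.mulSingle i (Multiplicative.ofAdd a) * t := by rw [ht, mul_inv_cancel_left]
    have hti : t i = 1 := by simp [ht, ha]
    have hcomm : ∀ w, lab w = i → Commute (raagGen Γ w) (σ t) := by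
      intro w hw
      apply hσc
      intro j
      by_cases hj : j = i
      · subst hj; rw [hti]; simp
      · exact ((raag_comm Γ (hadj j w (by rw [hw]; exact Ne.symm hj))).symm.zpow_right _)
    have hc : Commute (raagGen Γ v * (raagGen Γ (u i))⁻¹) (σ t) :=
      (hcomm v rfl).mul_left (hcomm (u i) (hu i)).inv_left
    have heq : σ s * (raagGen Γ v * (raagGen Γ (u i))⁻¹) * (σ s)⁻¹ =
        (raagGen Γ (u i) ^ a * (raagGen Γ v ^ a)⁻¹) *
        (raagGen Γ (u i) ^ (a + 1) * (raagGen Γ v ^ (a + 1))⁻¹)⁻¹ := by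
      rw [hst, map_mul, hσ, mul_assoc (raagGen Γ (u i) ^ a), ← hc.eq]
      group
    rw [heq]
    refine ((hm v a).mul (hm v (a + 1)).inv).mono ?_
    have h1 : a.natAbs ≤ N := hs i
    have h2 : (a + 1).natAbs ≤ N + 1 := by omega
    calc m v * a.natAbs + m v * (a + 1).natAbs ≤ K * N + K * (N + 1) :=
          Nat.add_le_add (Nat.mul_le_mul (hK v) h1) (Nat.mul_le_mul (hK v) h2)
      _ = K * (2 * N + 1) := by ring
  · intro hspec T _ _ hT
    refine ⟨?_, 1, 1, 1, 0, by omega, by omega, by omega, fun x _ => by simp⟩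
    choose u hu hadj using hspec
    obtain ⟨σ, hσ, hσc⟩ := exists_sigma Γ d lab u hu
      (fun i v hv => hadj i v (fun h => hv (by rw [h, hu])))
    have hlen : ∀ v : V, ∃ m, LenLE T (raagGen Γ v * (raagGen Γ (u (lab v)))⁻¹) m := by
      intro v
      apply LenLE.exists_of_mem
      rw [hT]
      exact hz _ _ (hu _).symm
    choose m hm using hlen
    have hK : ∃ K, ∀ v, m v ≤ K := ⟨∑ v, m v, fun v =>
      Finset.single_le_sum (f := m) (fun _ _ => Nat.zero_le _) (Finset.mem_univ v)⟩
    obtain ⟨K, hK⟩ := hK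
    refine ⟨K + 1, 1, 1, 0, by omega, by omega, by omega, fun N _ => ?_⟩
    refine (core_dist Γ d lab Φ hΦ u σ hσ T N K ?_).trans (by simp only [one_mul]; nlinarith)
    intro s v _
    have hcomm : ∀ w, Commute (raagGen Γ w) (σ s) := by
      intro w
      apply hσc
      intro j
      by_cases hj : w = u j
      · subst hj; exact (Commute.refl _).zpow_right _
      · exact (raag_comm Γ (hadj j w hj)).symm.zpow_right _
    have hc : Commute (raagGen Γ v * (raagGen Γ (u (lab v)))⁻¹) (σ s) :=
      (hcomm v).mul_left (hcomm _).inv_left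
    rw [← hc.eq, mul_inv_cancel_right]
    exact (hm v).mono (hK v)
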